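/- Let R be a commutative ring and n ≥ 3 odd. The first-projection map (g₁, g₂) ↦ g₁ defines a group isomorphism from Spin_{2n}(R) onto SG_{n-1}(R), with inverse g ↦ (g, (g*)^{−1}). -/

import Mathlib

open Matrix

noncomputable section

/-- Reindexing equivalence `Fin (2 ^ n) ⊕ Fin (2 ^ n) ≃ Fin (2 ^ (n + 1))`. -/
def pow2Equiv (n : ℕ) : Fin (2 ^ n) ⊕ Fin (2 ^ n) ≃ Fin (2 ^ (n + 1)) :=
  finSumFinEquiv.trans (finCongr (by rw [pow_succ]; ring))

/-- The Suslin matrix `S_n(v, w)` of size `2 ^ n` associated to `v, w : Fin (n+1) → R`. -/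
def sus (R : Type) [CommRing R] : (n : ℕ) → (Fin (n + 1) → R) → (Fin (n + 1) → R) →
    Matrix (Fin (2 ^ n)) (Fin (2 ^ n)) R
  | 0, v, _ => v 0 • 1
  | n + 1, v, w =>
      Matrix.reindex (pow2Equiv n) (pow2Equiv n)
        (Matrix.fromBlocks (v 0 • 1) (sus R n (v ∘ Fin.succ) (w ∘ Fin.succ))
          (-(sus R n (w ∘ Fin.succ) (v ∘ Fin.succ))ᵀ) (w 0 • 1))

/-- The conjugate Suslin matrix `S̄_n(v, w) = S_n(w, v)ᵀ`. -/
def susBar (R : Type) [CommRing R] (n : ℕ) (v w : Fin (n + 1) → R) :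
    Matrix (Fin (2 ^ n)) (Fin (2 ^ n)) R :=
  (sus R n w v)ᵀ

/-- Suslin's matrices `J_n`. -/
def Jmat (R : Type) [CommRing R] : (n : ℕ) → Matrix (Fin (2 ^ n)) (Fin (2 ^ n)) R
  | 0 => 1
  | n + 1 =>
      if Even (n + 1) then
        Matrix.reindex (pow2Equiv n) (pow2Equiv n)
          (Matrix.fromBlocks (Jmat R n) 0 0 (-(Jmat R n)))
      else
        Matrix.reindex (pow2Equiv n) (pow2Equiv n)
          (Matrix.fromBlocks 0 (Jmat R n) (-(Jmat R n)) 0)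

/-- The involution `M ↦ M* = J_n · Mᵀ · J_nᵀ`. -/
def invol (R : Type) [CommRing R] (n : ℕ) (M : Matrix (Fin (2 ^ n)) (Fin (2 ^ n)) R) :
    Matrix (Fin (2 ^ n)) (Fin (2 ^ n)) R :=
  Jmat R n * Mᵀ * (Jmat R n)ᵀ

/-- `φ(v, w) = [[0, S_n(v,w)], [S̄_n(v,w), 0]]` (note the shift: vectors in `R^{n+1}`,
matrices of size `2 ^ (n + 1)`). -/
def phiMat (R : Type) [CommRing R] (n : ℕ) (v w : Fin (n + 1) → R) :
    Matrix (Fin (2 ^ (n + 1))) (Fin (2 ^ (n + 1))) R :=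
  Matrix.reindex (pow2Equiv n) (pow2Equiv n)
    (Matrix.fromBlocks 0 (sus R n v w) (susBar R n v w) 0)

/-- The set of Suslin matrices of size `2 ^ m`. -/
def SuslinSet (R : Type) [CommRing R] (m : ℕ) : Set (Matrix (Fin (2 ^ m)) (Fin (2 ^ m)) R) :=
  {S | ∃ v w : Fin (m + 1) → R, S = sus R m v w}

/-- The image of the hyperbolic space `R^{m+1} ⊕ R^{m+1}` inside the Clifford algebra
`M_{2^{m+1}}(R)`. -/
def PhiSet (R : Type) [CommRing R] (m : ℕ) :
    Set (Matrix (Fin (2 ^ (m + 1))) (Fin (2 ^ (m + 1))) R) :=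
  {x | ∃ v w : Fin (m + 1) → R, x = phiMat R m v w}

/-- The block diagonal matrix `diag(g₁, g₂)`. -/
def diagBlock (R : Type) [CommRing R] (m : ℕ)
    (g₁ g₂ : Matrix (Fin (2 ^ m)) (Fin (2 ^ m)) R) :
    Matrix (Fin (2 ^ (m + 1))) (Fin (2 ^ (m + 1))) R :=
  Matrix.reindex (pow2Equiv m) (pow2Equiv m) (Matrix.fromBlocks g₁ 0 0 g₂)

/-- `Spin_{2(m+1)}(R)`, as the set of pairs `(g₁, g₂)` such that `x = diag(g₁, g₂)`
satisfies `x · x* = 1` and conjugation by `x` maps the image of the hyperbolic space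
onto itself. -/
def SpinPair (R : Type) [CommRing R] (m : ℕ) :
    Set (Matrix (Fin (2 ^ m)) (Fin (2 ^ m)) R × Matrix (Fin (2 ^ m)) (Fin (2 ^ m)) R) :=
  {p | IsUnit p.1 ∧ IsUnit p.2 ∧
    diagBlock R m p.1 p.2 * invol R (m + 1) (diagBlock R m p.1 p.2) = 1 ∧
    (fun y => diagBlock R m p.1 p.2 * y * (diagBlock R m p.1 p.2)⁻¹) '' PhiSet R m
      = PhiSet R m}

/-- The group `G_m(R)` of `g ∈ GL_{2^m}(R)` such that `g · S · g*` is a Suslin matrix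
for every Suslin matrix `S`. -/
def GSet (R : Type) [CommRing R] (m : ℕ) : Set (Matrix (Fin (2 ^ m)) (Fin (2 ^ m)) R) :=
  {g | IsUnit g ∧ ∀ S ∈ SuslinSet R m, g * S * invol R m g ∈ SuslinSet R m}

/-- The group `SG_m(R)` of `g ∈ G_m(R)` preserving the length `l(S(v,w)) = v ⬝ᵥ w`. -/
def SGSet (R : Type) [CommRing R] (m : ℕ) : Set (Matrix (Fin (2 ^ m)) (Fin (2 ^ m)) R) :=
  {g | g ∈ GSet R m ∧ ∀ v w v' w' : Fin (m + 1) → R,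
    g * sus R m v w * invol R m g = sus R m v' w' → v' ⬝ᵥ w' = v ⬝ᵥ w}

/-- The hyperbolic quadratic form `q(v, w) = v ⬝ᵥ w` on `R^n ⊕ R^n`. -/
def hypForm (R : Type) [CommRing R] (n : ℕ) :
    QuadraticForm R ((Fin n → R) × (Fin n → R)) :=
  LinearMap.BilinMap.toQuadraticMap
    (LinearMap.mk₂ R (fun x y => x.1 ⬝ᵥ y.2)
      (fun x x' y => by simp [add_dotProduct])
      (fun c x y => by simp [smul_dotProduct])
      (fun x y y' => by simp [dotProduct_add])
      (fun x c y => by simp [dotProduct_smul]))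

/-- `E_i = S_m(e_i, 0)`. -/
def Emat (R : Type) [CommRing R] (m : ℕ) (i : Fin (m + 1)) :
    Matrix (Fin (2 ^ m)) (Fin (2 ^ m)) R :=
  sus R m (Pi.single i 1) 0

/-- `F_i = S_m(0, e_i)`. -/
def Fmat (R : Type) [CommRing R] (m : ℕ) (i : Fin (m + 1)) :
    Matrix (Fin (2 ^ m)) (Fin (2 ^ m)) R :=
  sus R m 0 (Pi.single i 1)

/-!
For `m + 1` odd, `J_{m+1}` is block antidiagonal, so `diag(g₁, g₂)* = diag(g₂*, g₁*)`, and
`x · x* = 1` for `x = diag(g₁, g₂)` means `g₂ = (g₁*)⁻¹`. Conjugation by such an `x` acts on the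
upper right block of `φ(v, w)` by `S ↦ g₁ · S · g₁*`, and it preserves the length because
`φ(v, w)² = l(S) · 1`. Conversely, when `S ↦ g · S · g*` preserves Suslin matrices and lengths,
polarizing `S · S̄ = l(S) · 1` shows that the lower left block transforms compatibly. That the
conjugation is onto follows by applying the same to `g⁻¹`: a submodule of a finite module which is
stable under an invertible endomorphism is stable under its inverse.
-/

section StableSubmodule

variable {R M : Type*} [Ring R] [OrzechProperty R] [AddCommGroup M] [Module R M] [Module.Finite R M]

-- `f` induces a surjective endomorphism of the finite module `M ⧸ p`, which is then injective.
theorem mem_of_apply_mem_of_surjective {f : M →ₗ[R] M} (hf : Function.Surjective f)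
    {p : Submodule R M} (hp : p ≤ p.comap f) {x : M} (hx : f x ∈ p) : x ∈ p := by
  have hsurj : Function.Surjective (p.mapQ p f hp) := by
    rw [← LinearMap.range_eq_top, Submodule.range_mapQ, LinearMap.range_eq_top.2 hf,
      Submodule.map_top, Submodule.range_mkQ]
  have hinj := OrzechProperty.injective_of_surjective_endomorphism _ hsurj
  rw [← Submodule.Quotient.mk_eq_zero] at hx ⊢
  exact hinj (by rwa [map_zero, Submodule.mapQ_apply])

end StableSubmodule

/-- Square matrices of size `2 ^ n`, the ambient algebra of the Suslin matrices `S_n(v, w)`. -/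
abbrev PowTwoMatrix (R : Type*) (n : ℕ) := Matrix (Fin (2 ^ n)) (Fin (2 ^ n)) R

/-- The underlying module `R^n ⊕ R^n` of the hyperbolic form `hypForm R n`. -/
abbrev HyperbolicSpace (R : Type*) (n : ℕ) := (Fin n → R) × (Fin n → R)

/-- The `2 × 2` block matrix `[[A, B], [C, D]]`, of size `2 ^ (n + 1)`. -/
def blockMat {R : Type*} {n : ℕ} (A B C D : PowTwoMatrix R n) : PowTwoMatrix R (n + 1) :=
  Matrix.reindex (pow2Equiv n) (pow2Equiv n) (Matrix.fromBlocks A B C D)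

section BlockMat

variable {R : Type*} {n : ℕ}

theorem blockMat_inj {A B C D A' B' C' D' : PowTwoMatrix R n} :
    blockMat A B C D = blockMat A' B' C' D' ↔ A = A' ∧ B = B' ∧ C = C' ∧ D = D' := by
  rw [blockMat, blockMat, (Matrix.reindex _ _).injective.eq_iff, Matrix.fromBlocks_inj]

theorem blockMat_transpose (A B C D : PowTwoMatrix R n) :
    (blockMat A B C D)ᵀ = blockMat Aᵀ Cᵀ Bᵀ Dᵀ := by
  rw [blockMat, Matrix.transpose_reindex, Matrix.fromBlocks_transpose, blockMat]

theorem blockMat_one [Zero R] [One R] : blockMat (1 : PowTwoMatrix R n) 0 0 1 = 1 := by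
  simp [blockMat]

theorem blockMat_add [Add R] (A B C D A' B' C' D' : PowTwoMatrix R n) :
    blockMat A B C D + blockMat A' B' C' D' =
      blockMat (A + A') (B + B') (C + C') (D + D') := by
  rw [blockMat, blockMat, blockMat, ← Matrix.fromBlocks_add]; rfl

theorem blockMat_neg [Neg R] (A B C D : PowTwoMatrix R n) :
    -blockMat A B C D = blockMat (-A) (-B) (-C) (-D) := by
  rw [blockMat, blockMat, ← Matrix.fromBlocks_neg]; rfl

theorem blockMat_smul {α : Type*} [SMul α R] (c : α) (A B C D : PowTwoMatrix R n) :
    c • blockMat A B C D = blockMat (c • A) (c • B) (c • C) (c • D) := by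
  rw [blockMat, blockMat, ← Matrix.fromBlocks_smul]; rfl

theorem blockMat_mul [NonUnitalNonAssocSemiring R] (A B C D A' B' C' D' : PowTwoMatrix R n) :
    blockMat A B C D * blockMat A' B' C' D' =
      blockMat (A * A' + B * C') (A * B' + B * D') (C * A' + D * C') (C * B' + D * D') := by
  simp [blockMat, Matrix.submatrix_mul_equiv, Matrix.fromBlocks_multiply]

theorem smul_one_powTwoMatrix_inj [NonAssocSemiring R] {a b : R} :
    a • (1 : PowTwoMatrix R n) = b • 1 ↔ a = b := by
  rw [Matrix.smul_one_eq_diagonal, Matrix.smul_one_eq_diagonal, Matrix.diagonal_eq_diagonal_iff,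
    forall_const]

end BlockMat

section Suslin

variable {R : Type} [CommRing R] {n : ℕ}

theorem sus_succ (v w : Fin (n + 2) → R) :
    sus R (n + 1) v w =
      blockMat (v 0 • 1) (sus R n (v ∘ Fin.succ) (w ∘ Fin.succ))
        (-susBar R n (v ∘ Fin.succ) (w ∘ Fin.succ)) (w 0 • 1) := rfl

theorem susBar_succ (v w : Fin (n + 2) → R) :
    susBar R (n + 1) v w =
      blockMat (w 0 • 1) (-sus R n (v ∘ Fin.succ) (w ∘ Fin.succ))
        (susBar R n (v ∘ Fin.succ) (w ∘ Fin.succ)) (v 0 • 1) := by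
  simp [susBar, sus_succ, blockMat_transpose]

theorem phiMat_eq_blockMat (v w : Fin (n + 1) → R) :
    phiMat R n v w = blockMat 0 (sus R n v w) (susBar R n v w) 0 := rfl

theorem sus_add (v w v' w' : Fin (n + 1) → R) :
    sus R n (v + v') (w + w') = sus R n v w + sus R n v' w' := by
  induction n with
  | zero => simp [sus, add_smul]
  | succ n ih =>
    simp only [sus_succ, susBar, blockMat_add, Pi.add_apply, add_smul, Pi.add_comp, ih,
      Matrix.transpose_add, neg_add]

theorem sus_smul (c : R) (v w : Fin (n + 1) → R) :
    sus R n (c • v) (c • w) = c • sus R n v w := by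
  induction n with
  | zero => simp [sus, mul_smul]
  | succ n ih =>
    simp only [sus_succ, susBar, blockMat_smul, Pi.smul_apply, smul_assoc, Pi.smul_comp, ih,
      Matrix.transpose_smul, smul_neg]

variable (R n) in
/-- The Suslin matrix `S_n(v, w)` as a linear function of the pair `(v, w)`. -/
def suslinMap : HyperbolicSpace R (n + 1) →ₗ[R] PowTwoMatrix R n where
  toFun x := sus R n x.1 x.2
  map_add' x y := sus_add x.1 x.2 y.1 y.2
  map_smul' c x := sus_smul c x.1 x.2

variable (R n) in
/-- The conjugate Suslin matrix `S̄_n(v, w)` as a linear function of the pair `(v, w)`. -/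
def suslinBarMap : HyperbolicSpace R (n + 1) →ₗ[R] PowTwoMatrix R n where
  toFun x := susBar R n x.1 x.2
  map_add' x y := by simp [susBar, sus_add]
  map_smul' c x := by simp [susBar, sus_smul]

theorem suslinMap_apply (x : HyperbolicSpace R (n + 1)) :
    suslinMap R n x = sus R n x.1 x.2 := rfl

theorem suslinBarMap_apply (x : HyperbolicSpace R (n + 1)) :
    suslinBarMap R n x = susBar R n x.1 x.2 := rfl

theorem sus_mul_susBar_and_susBar_mul_sus (v w : Fin (n + 1) → R) :
    sus R n v w * susBar R n v w = (v ⬝ᵥ w) • 1 ∧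
      susBar R n v w * sus R n v w = (v ⬝ᵥ w) • 1 := by
  induction n with
  | zero => simp [sus, susBar, dotProduct, smul_smul, mul_comm]
  | succ n ih =>
    have hdot : v ⬝ᵥ w = v 0 * w 0 + (v ∘ Fin.succ) ⬝ᵥ (w ∘ Fin.succ) := by
      simp [dotProduct, Fin.sum_univ_succ]
    simp [sus_succ, susBar_succ, blockMat_mul, ← blockMat_one (n := n), blockMat_smul, blockMat_add,
      ih, hdot, smul_smul, add_smul, mul_comm, add_comm]

theorem suslinMap_mul_suslinBarMap (x : HyperbolicSpace R (n + 1)) :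
    suslinMap R n x * suslinBarMap R n x = hypForm R (n + 1) x • 1 :=
  (sus_mul_susBar_and_susBar_mul_sus x.1 x.2).1

theorem suslinMap_mul_suslinBarMap_add_swap (x y : HyperbolicSpace R (n + 1)) :
    suslinMap R n x * suslinBarMap R n y + suslinMap R n y * suslinBarMap R n x =
      QuadraticMap.polar (hypForm R (n + 1)) x y • 1 := by
  have h := suslinMap_mul_suslinBarMap (x + y)
  rw [map_add, map_add, mul_add, add_mul, add_mul, suslinMap_mul_suslinBarMap,
    suslinMap_mul_suslinBarMap] at h
  rw [QuadraticMap.polar, sub_smul, sub_smul, ← h]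
  abel

theorem phiMat_mul_self (x : HyperbolicSpace R (n + 1)) :
    phiMat R n x.1 x.2 * phiMat R n x.1 x.2 = hypForm R (n + 1) x • 1 := by
  obtain ⟨h₁, h₂⟩ := sus_mul_susBar_and_susBar_mul_sus x.1 x.2
  simp [phiMat_eq_blockMat, blockMat_mul, h₁, h₂, ← blockMat_one (n := n), blockMat_smul, hypForm]

theorem sus_succ_inj {v w v' w' : Fin (n + 2) → R} :
    sus R (n + 1) v w = sus R (n + 1) v' w' ↔
      v 0 = v' 0 ∧ w 0 = w' 0 ∧
        phiMat R n (v ∘ Fin.succ) (w ∘ Fin.succ) = phiMat R n (v' ∘ Fin.succ) (w' ∘ Fin.succ) := by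
  simp only [sus_succ, phiMat_eq_blockMat, blockMat_inj, smul_one_powTwoMatrix_inj, neg_inj]
  tauto

theorem eq_of_zero_of_comp_succ {α : Type*} {v v' : Fin (n + 1) → α} (h₀ : v 0 = v' 0)
    (h : v ∘ Fin.succ = v' ∘ Fin.succ) : v = v' :=
  funext (Fin.cases h₀ (congrFun h))

theorem phiMat_inj {v w v' w' : Fin (n + 1) → R} :
    phiMat R n v w = phiMat R n v' w' ↔ v = v' ∧ w = w' := by
  simp only [phiMat_eq_blockMat, blockMat_inj, susBar, Matrix.transpose_inj, true_and, and_true]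
  induction n with
  | zero => simp only [sus, smul_one_powTwoMatrix_inj, funext_iff, Fin.forall_fin_succ,
      IsEmpty.forall_iff, and_true]
  | succ n ih =>
    refine ⟨fun ⟨h, _⟩ => ?_, by rintro ⟨rfl, rfl⟩; simp⟩
    obtain ⟨hv₀, hw₀, htail⟩ := sus_succ_inj.1 h
    simp only [phiMat_eq_blockMat, blockMat_inj, susBar, Matrix.transpose_inj, true_and, and_true,
      ih] at htail
    exact ⟨eq_of_zero_of_comp_succ hv₀ htail.1, eq_of_zero_of_comp_succ hw₀ htail.2⟩

theorem suslinMap_injective (hn : n ≠ 0) : Function.Injective (suslinMap R n) := by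
  obtain ⟨n, rfl⟩ := Nat.exists_eq_succ_of_ne_zero hn
  intro x y hxy
  obtain ⟨hv₀, hw₀, htail⟩ := sus_succ_inj.1 hxy
  obtain ⟨hv, hw⟩ := phiMat_inj.1 htail
  exact Prod.ext (eq_of_zero_of_comp_succ hv₀ hv) (eq_of_zero_of_comp_succ hw₀ hw)

/-- The point `(e₀, e₀)` of the hyperbolic space, at which the Suslin matrix is `1`. -/
def hypUnit (R : Type) [CommRing R] (n : ℕ) : HyperbolicSpace R (n + 1) :=
  (Pi.single 0 1, Pi.single 0 1)

theorem hypForm_hypUnit : hypForm R (n + 1) (hypUnit R n) = 1 := by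
  simp [hypForm, hypUnit]

theorem suslinMap_hypUnit : suslinMap R n (hypUnit R n) = 1 := by
  cases n with
  | zero => simp [suslinMap_apply, hypUnit, sus]
  | succ n =>
    have htail : (Pi.single 0 1 : Fin (n + 2) → R) ∘ Fin.succ = 0 := by
      ext i; simp
    have hzero : sus R n 0 0 = 0 := (suslinMap R n).map_zero
    simp [suslinMap_apply, hypUnit, sus_succ, susBar, htail, hzero, blockMat_one]

theorem suslinBarMap_hypUnit : suslinBarMap R n (hypUnit R n) = 1 := by
  have h := suslinMap_mul_suslinBarMap (hypUnit R n)
  rwa [suslinMap_hypUnit, hypForm_hypUnit, one_mul, one_smul] at h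

end Suslin

section Involution

variable {R : Type} [CommRing R] {n : ℕ}

theorem Jmat_succ_of_even (hn : Even (n + 1)) :
    Jmat R (n + 1) = blockMat (Jmat R n) 0 0 (-Jmat R n) := by
  rw [Jmat, if_pos hn, blockMat]

theorem Jmat_succ_of_odd (hn : Odd (n + 1)) :
    Jmat R (n + 1) = blockMat 0 (Jmat R n) (-Jmat R n) 0 := by
  rw [Jmat, if_neg (Nat.not_even_iff_odd.2 hn), blockMat]

theorem Jmat_mul_transpose (R : Type) [CommRing R] (n : ℕ) : Jmat R n * (Jmat R n)ᵀ = 1 := by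
  induction n with
  | zero => simp [Jmat]
  | succ n ih =>
    rcases Nat.even_or_odd (n + 1) with hn | hn
    · simp [Jmat_succ_of_even hn, blockMat_transpose, blockMat_mul, blockMat_one, ih]
    · simp [Jmat_succ_of_odd hn, blockMat_transpose, blockMat_mul, blockMat_one, ih]

theorem Jmat_transpose_mul (R : Type) [CommRing R] (n : ℕ) : (Jmat R n)ᵀ * Jmat R n = 1 :=
  mul_eq_one_comm.1 (Jmat_mul_transpose R n)

theorem Jmat_transpose_eq_or_eq_neg (R : Type) [CommRing R] (n : ℕ) :
    (Jmat R n)ᵀ = Jmat R n ∨ (Jmat R n)ᵀ = -Jmat R n := by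
  induction n with
  | zero => simp [Jmat]
  | succ n ih =>
    rcases Nat.even_or_odd (n + 1) with hn | hn <;> rcases ih with h | h
    · simp [Jmat_succ_of_even hn, blockMat_transpose, h]
    · simp [Jmat_succ_of_even hn, blockMat_transpose, blockMat_neg, h]
    · simp [Jmat_succ_of_odd hn, blockMat_transpose, blockMat_neg, h]
    · simp [Jmat_succ_of_odd hn, blockMat_transpose, h]

theorem invol_mul (A B : PowTwoMatrix R n) : invol R n (A * B) = invol R n B * invol R n A := by
  simp only [invol, Matrix.transpose_mul, mul_assoc, ← mul_assoc (Jmat R n)ᵀ (Jmat R n),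
    Jmat_transpose_mul, one_mul]

theorem invol_invol (A : PowTwoMatrix R n) : invol R n (invol R n A) = A := by
  have hA : Jmat R n * ((Jmat R n)ᵀ * A * Jmat R n) * (Jmat R n)ᵀ = A := by
    simp only [mul_assoc, Jmat_mul_transpose, mul_one]
    rw [← mul_assoc, Jmat_mul_transpose, one_mul]
  simp only [invol, Matrix.transpose_mul, Matrix.transpose_transpose]
  rcases Jmat_transpose_eq_or_eq_neg R n with h | h <;> simpa [h, mul_assoc] using hA

theorem invol_inv (A : PowTwoMatrix R n) : invol R n A⁻¹ = (invol R n A)⁻¹ := by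
  simp only [invol, Matrix.mul_inv_rev, Matrix.transpose_nonsing_inv, mul_assoc,
    Matrix.inv_eq_right_inv (Jmat_mul_transpose R n),
    Matrix.inv_eq_right_inv (Jmat_transpose_mul R n)]

theorem isUnit_invol {A : PowTwoMatrix R n} (hA : IsUnit A) : IsUnit (invol R n A) :=
  ((IsUnit.of_mul_eq_one _ (Jmat_mul_transpose R n)).mul (Matrix.isUnit_transpose A |>.2 hA)).mul
    (IsUnit.of_mul_eq_one _ (Jmat_transpose_mul R n))

end Involution

section DiagBlock

variable {R : Type} [CommRing R] {n : ℕ}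

theorem diagBlock_eq_blockMat (a b : PowTwoMatrix R n) :
    diagBlock R n a b = blockMat a 0 0 b := rfl

theorem diagBlock_mul (a b c d : PowTwoMatrix R n) :
    diagBlock R n a b * diagBlock R n c d = diagBlock R n (a * c) (b * d) := by
  simp [diagBlock_eq_blockMat, blockMat_mul]

theorem diagBlock_eq_one {a b : PowTwoMatrix R n} : diagBlock R n a b = 1 ↔ a = 1 ∧ b = 1 := by
  simp [diagBlock_eq_blockMat, ← blockMat_one, blockMat_inj]

theorem invol_diagBlock (hn : Odd (n + 1)) (a b : PowTwoMatrix R n) :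
    invol R (n + 1) (diagBlock R n a b) = diagBlock R n (invol R n b) (invol R n a) := by
  simp [diagBlock_eq_blockMat, invol, Jmat_succ_of_odd hn, blockMat_transpose, blockMat_mul]

/-- The invertible block diagonal matrix `diag(g, h⁻¹)`. -/
def diagUnit (g h : (PowTwoMatrix R n)ˣ) : (PowTwoMatrix R (n + 1))ˣ where
  val := diagBlock R n g ↑h⁻¹
  inv := diagBlock R n ↑g⁻¹ h
  val_inv := by simp only [diagBlock_mul, diagBlock_eq_one, Units.mul_inv, Units.inv_mul, and_self]
  inv_val := by simp only [diagBlock_mul, diagBlock_eq_one, Units.mul_inv, Units.inv_mul, and_self]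

theorem coe_diagUnit (g h : (PowTwoMatrix R n)ˣ) :
    (diagUnit g h).val = diagBlock R n g.val h⁻¹.val := rfl

theorem diagUnit_inv (g h : (PowTwoMatrix R n)ˣ) : (diagUnit g h)⁻¹ = diagUnit g⁻¹ h⁻¹ :=
  Units.ext (by simp [diagUnit])

theorem conj_phiMat (g h : (PowTwoMatrix R n)ˣ) (x : HyperbolicSpace R (n + 1)) :
    (diagUnit g h).val * phiMat R n x.1 x.2 * (diagUnit g h)⁻¹.val =
      blockMat 0 (g.val * suslinMap R n x * h.val)
        (h⁻¹.val * suslinBarMap R n x * g⁻¹.val) 0 := by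
  simp [diagUnit_inv, coe_diagUnit, diagBlock_eq_blockMat, phiMat_eq_blockMat, blockMat_mul,
    suslinMap_apply, suslinBarMap_apply]

end DiagBlock

/-- The map `S ↦ g S h` sends Suslin matrices to Suslin matrices of the same length. -/
structure IsSuslinIsometry {R : Type} [CommRing R] {n : ℕ} (g h : PowTwoMatrix R n) : Prop where
  exists_eq : ∀ x, ∃ y, g * suslinMap R n x * h = suslinMap R n y
  hypForm_eq : ∀ {x y}, g * suslinMap R n x * h = suslinMap R n y →
    hypForm R (n + 1) y = hypForm R (n + 1) x

namespace IsSuslinIsometry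

variable {R : Type} [CommRing R] {n : ℕ}

theorem mul {g h g' h' : PowTwoMatrix R n} (hgh : IsSuslinIsometry g h)
    (hgh' : IsSuslinIsometry g' h') : IsSuslinIsometry (g * g') (h' * h) := by
  have hassoc (A : PowTwoMatrix R n) : g * g' * A * (h' * h) = g * (g' * A * h') * h := by
    simp only [mul_assoc]
  constructor
  · intro x
    obtain ⟨y, hy⟩ := hgh'.exists_eq x
    obtain ⟨z, hz⟩ := hgh.exists_eq y
    exact ⟨z, by rw [hassoc, hy, hz]⟩
  · intro x z hz
    obtain ⟨y, hy⟩ := hgh'.exists_eq x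
    rw [hassoc, hy] at hz
    exact (hgh.hypForm_eq hz).trans (hgh'.hypForm_eq hy)

theorem polar_eq {g h : PowTwoMatrix R n} (hgh : IsSuslinIsometry g h)
    {x y x' y' : HyperbolicSpace R (n + 1)} (hx : g * suslinMap R n x * h = suslinMap R n x')
    (hy : g * suslinMap R n y * h = suslinMap R n y') :
    QuadraticMap.polar (hypForm R (n + 1)) x' y' = QuadraticMap.polar (hypForm R (n + 1)) x y := by
  have hxy : g * suslinMap R n (x + y) * h = suslinMap R n (x' + y') := by
    rw [map_add, map_add, mul_add, add_mul, hx, hy]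
  simp only [QuadraticMap.polar, hgh.hypForm_eq hxy, hgh.hypForm_eq hx, hgh.hypForm_eq hy]

variable {g h : (PowTwoMatrix R n)ˣ}

theorem inv (hgh : IsSuslinIsometry g.val h.val) : IsSuslinIsometry g⁻¹.val h⁻¹.val := by
  have hcancel (A : PowTwoMatrix R n) : g.val * (g⁻¹.val * A * h⁻¹.val) * h.val = A := by
    simp only [mul_assoc, Units.mul_inv_cancel_left, Units.inv_mul, mul_one]
  constructor
  · intro x
    have hsurj : Function.Surjective (LinearMap.mulLeftRight R (g.val, h.val)) :=
      fun A => ⟨g⁻¹.val * A * h⁻¹.val, hcancel A⟩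
    have hstable : LinearMap.range (suslinMap R n) ≤
        (LinearMap.range (suslinMap R n)).comap (LinearMap.mulLeftRight R (g.val, h.val)) := by
      rintro _ ⟨x, rfl⟩
      exact (hgh.exists_eq x).imp fun _ => Eq.symm
    obtain ⟨y, hy⟩ : g⁻¹.val * suslinMap R n x * h⁻¹.val ∈ LinearMap.range (suslinMap R n) :=
      mem_of_apply_mem_of_surjective hsurj hstable ⟨x, (hcancel _).symm⟩
    exact ⟨y, hy.symm⟩
  · intro x y hy
    exact (hgh.hypForm_eq (by rw [← hy, hcancel])).symm

-- Polarizing `S S̄ = l(S)` against `(e₀, e₀)` gives `S + S̄ = B(x, e)`; comparing with the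
-- polarization at the image `gh` of `1`, which has length `1`, expresses `S̄ y` through `S̄ x`.
theorem inv_mul_suslinBarMap_mul_inv (hgh : IsSuslinIsometry g.val h.val)
    {x y : HyperbolicSpace R (n + 1)} (hxy : g.val * suslinMap R n x * h.val = suslinMap R n y) :
    h⁻¹.val * suslinBarMap R n x * g⁻¹.val = suslinBarMap R n y := by
  obtain ⟨t, ht⟩ := hgh.exists_eq (hypUnit R n)
  have hgh_eq : suslinMap R n t = (g * h).val := by
    rw [← ht, suslinMap_hypUnit, mul_one, Units.val_mul]
  have hbar_t : suslinBarMap R n t = (g * h)⁻¹.val := by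
    rw [← Units.mul_right_inj (g * h), ← hgh_eq, suslinMap_mul_suslinBarMap, hgh.hypForm_eq ht,
      hypForm_hypUnit, one_smul, hgh_eq, Units.mul_inv]
  have hpolar := suslinMap_mul_suslinBarMap_add_swap t y
  rw [hgh.polar_eq ht hxy] at hpolar
  have hpolar' := suslinMap_mul_suslinBarMap_add_swap (hypUnit R n) x
  rw [suslinMap_hypUnit, suslinBarMap_hypUnit, one_mul, mul_one] at hpolar'
  have hconj : g.val * (suslinBarMap R n x + suslinMap R n x) * g⁻¹.val =
      suslinBarMap R n x + suslinMap R n x := by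
    rw [hpolar', mul_smul_comm, mul_one, smul_mul_assoc, Units.mul_inv]
  have hcross : suslinMap R n y * suslinBarMap R n t = g.val * suslinMap R n x * g⁻¹.val := by
    rw [← hxy, hbar_t, _root_.mul_inv_rev, Units.val_mul]
    simp only [mul_assoc, Units.mul_inv_cancel_left]
  have hmain : (g * h).val * suslinBarMap R n y = g.val * suslinBarMap R n x * g⁻¹.val := by
    rw [hcross, ← hpolar', ← hconj, mul_add, add_mul, hgh_eq] at hpolar
    exact add_right_cancel hpolar
  rw [← Units.mul_right_inj (g * h), hmain, Units.val_mul]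
  simp only [mul_assoc, Units.mul_inv_cancel_left]

theorem mapsTo_conj_PhiSet (hgh : IsSuslinIsometry g.val h.val) :
    Set.MapsTo (fun A => (diagUnit g h).val * A * (diagUnit g h)⁻¹.val)
      (PhiSet R n) (PhiSet R n) := by
  rintro _ ⟨v, w, rfl⟩
  obtain ⟨y, hy⟩ := hgh.exists_eq (v, w)
  refine ⟨y.1, y.2, (conj_phiMat g h (v, w)).trans ?_⟩
  rw [hy, hgh.inv_mul_suslinBarMap_mul_inv hy]
  rfl

theorem of_mapsTo_conj_PhiSet (hn : n ≠ 0)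
    (hconj : Set.MapsTo (fun A => (diagUnit g h).val * A * (diagUnit g h)⁻¹.val)
      (PhiSet R n) (PhiSet R n)) :
    IsSuslinIsometry g.val h.val := by
  have exists_isometric_image (x : HyperbolicSpace R (n + 1)) :
      ∃ y, g.val * suslinMap R n x * h.val = suslinMap R n y ∧
        hypForm R (n + 1) y = hypForm R (n + 1) x := by
    obtain ⟨v, w, hvw⟩ := hconj ⟨x.1, x.2, rfl⟩
    have hblocks := hvw
    beta_reduce at hblocks
    rw [conj_phiMat, phiMat_eq_blockMat, blockMat_inj] at hblocks
    refine ⟨(v, w), hblocks.2.1, ?_⟩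
    rw [← smul_one_powTwoMatrix_inj (n := n + 1), ← phiMat_mul_self, ← hvw]
    simp only [mul_assoc, Units.inv_mul_cancel_left]
    rw [← mul_assoc (phiMat R n _ _), phiMat_mul_self, smul_mul_assoc, one_mul, mul_smul_comm,
      Units.mul_inv]
  refine ⟨fun x => (exists_isometric_image x).imp fun _ => And.left, fun {x y} hy => ?_⟩
  obtain ⟨z, hz, hqz⟩ := exists_isometric_image x
  rwa [suslinMap_injective hn (hy.symm.trans hz)]

end IsSuslinIsometry

section SpinGroup

variable {R : Type} [CommRing R] {n : ℕ}

theorem image_conj_PhiSet_eq_iff (hn : n ≠ 0) {g h : PowTwoMatrix R n} (hg : IsUnit g)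
    (hh : IsUnit h) :
    (fun A => diagBlock R n g h⁻¹ * A * (diagBlock R n g h⁻¹)⁻¹) '' PhiSet R n = PhiSet R n ↔
      IsSuslinIsometry g h := by
  obtain ⟨g, rfl⟩ := hg
  obtain ⟨h, rfl⟩ := hh
  rw [← Matrix.coe_units_inv h, ← coe_diagUnit, ← Matrix.coe_units_inv]
  refine ⟨fun himage => .of_mapsTo_conj_PhiSet hn ?_, fun hgh => ?_⟩
  · exact Set.mapsTo_iff_image_subset.2 himage.subset
  · refine hgh.mapsTo_conj_PhiSet.image_subset.antisymm fun A hA =>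
      ⟨_, hgh.inv.mapsTo_conj_PhiSet hA, ?_⟩
    simp only [← diagUnit_inv, inv_inv, mul_assoc, Units.mul_inv_cancel_left, Units.mul_inv,
      mul_one]

theorem mem_SGSet_iff {g : PowTwoMatrix R n} :
    g ∈ SGSet R n ↔ IsUnit g ∧ IsSuslinIsometry g (invol R n g) := by
  constructor
  · rintro ⟨⟨hunit, hstable⟩, hlength⟩
    refine ⟨hunit, fun x => ?_, fun hxy => hlength _ _ _ _ hxy⟩
    obtain ⟨v, w, hvw⟩ := hstable _ ⟨x.1, x.2, rfl⟩
    exact ⟨(v, w), hvw⟩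
  · rintro ⟨hunit, hg⟩
    refine ⟨⟨hunit, ?_⟩, fun v w v' w' => hg.hypForm_eq (x := (v, w)) (y := (v', w'))⟩
    rintro _ ⟨v, w, rfl⟩
    obtain ⟨y, hy⟩ := hg.exists_eq (v, w)
    exact ⟨y.1, y.2, hy⟩

theorem mul_mem_SGSet {g g' : PowTwoMatrix R n} (hg : g ∈ SGSet R n) (hg' : g' ∈ SGSet R n) :
    g * g' ∈ SGSet R n := by
  rw [mem_SGSet_iff] at hg hg' ⊢
  exact ⟨hg.1.mul hg'.1, by rw [invol_mul]; exact hg.2.mul hg'.2⟩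

theorem diagBlock_mul_invol_eq_one_iff (hn : Odd (n + 1)) {g k : PowTwoMatrix R n}
    (hg : IsUnit g) : diagBlock R n g k * invol R (n + 1) (diagBlock R n g k) = 1 ↔
      k = (invol R n g)⁻¹ := by
  rw [invol_diagBlock hn, diagBlock_mul, diagBlock_eq_one]
  constructor
  · exact fun h => (Matrix.inv_eq_left_inv h.2).symm
  · rintro rfl
    rw [invol_inv, invol_invol]
    exact ⟨Matrix.mul_nonsing_inv _ ((Matrix.isUnit_iff_isUnit_det _).1 hg),
      Matrix.nonsing_inv_mul _ ((Matrix.isUnit_iff_isUnit_det _).1 (isUnit_invol hg))⟩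

theorem mem_SpinPair_iff (hn₀ : n ≠ 0) (hn : Odd (n + 1))
    {p : PowTwoMatrix R n × PowTwoMatrix R n} :
    p ∈ SpinPair R n ↔ p.1 ∈ SGSet R n ∧ p.2 = (invol R n p.1)⁻¹ := by
  obtain ⟨g, k⟩ := p
  rw [mem_SGSet_iff]
  dsimp only
  constructor
  · rintro ⟨hg : IsUnit g, -, hstar, himage⟩
    obtain rfl : k = (invol R n g)⁻¹ := (diagBlock_mul_invol_eq_one_iff hn hg).1 hstar
    exact ⟨⟨hg, (image_conj_PhiSet_eq_iff hn₀ hg (isUnit_invol hg)).1 himage⟩, rfl⟩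
  · rintro ⟨⟨hg, hisom⟩, rfl⟩
    exact ⟨hg, Matrix.isUnit_nonsing_inv_iff.2 (isUnit_invol hg),
      (diagBlock_mul_invol_eq_one_iff hn hg).2 rfl,
      (image_conj_PhiSet_eq_iff hn₀ hg (isUnit_invol hg)).2 hisom⟩

end SpinGroup

/-- for odd `n ≥ 3` (here `n = m + 1`), the first projection
`(g₁, g₂) ↦ g₁` is a group isomorphism of `Spin_{2n}(R)` onto `SG_{n-1}(R)`,
with inverse `g ↦ (g, (g*)⁻¹)`. -/
theorem spin_iso_SG (R : Type) [CommRing R] (m : ℕ) (hm : 2 ≤ m) (hodd : Odd (m + 1)) :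
    Set.BijOn Prod.fst (SpinPair R m) (SGSet R m) ∧
    (∀ p ∈ SpinPair R m, ∀ q ∈ SpinPair R m, (p.1 * q.1, p.2 * q.2) ∈ SpinPair R m) ∧
    (∀ g ∈ SGSet R m, (g, (invol R m g)⁻¹) ∈ SpinPair R m) := by
  have hm₀ : m ≠ 0 := by omega
  refine ⟨⟨fun p hp => ?_, fun p hp q hq hpq => ?_, fun g hg => ?_⟩, fun p hp q hq => ?_,
    fun g hg => ?_⟩
  · exact ((mem_SpinPair_iff hm₀ hodd).1 hp).1
  · rw [mem_SpinPair_iff hm₀ hodd] at hp hq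
    exact Prod.ext hpq (by rw [hp.2, hq.2, hpq])
  · exact ⟨(g, (invol R m g)⁻¹), (mem_SpinPair_iff hm₀ hodd).2 ⟨hg, rfl⟩, rfl⟩
  · rw [mem_SpinPair_iff hm₀ hodd] at hp hq ⊢
    exact ⟨mul_mem_SGSet hp.1 hq.1, by rw [hp.2, hq.2, invol_mul, Matrix.mul_inv_rev]⟩
  · exact (mem_SpinPair_iff hm₀ hodd).2 ⟨hg, rfl⟩
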